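/- Let u₀ : ℝ³ → ℝ³ be defined by u₀(x,y,z) := (−2zx, −2zy, x² + y² − z² + 1) / √(4z²(x² + y²) + (1 + x² + y² − z²)²). Then u₀ is differentiable at every point p = (x,y,z) of the open unit ball, and, with ρ² := x² + y², the squared Frobenius norm of its Jacobian satisfies ‖Du₀(p)‖² = (4ρ² + 8z²) / (4z²ρ² + (1 + ρ² − z²)²), where the denominator equals ρ⁴ + 2ρ²z² + 2ρ² + z⁴ − 2z² + 1. -/

import Mathlib

noncomputable section

open Real

/-- `ℝ³` with the Euclidean norm. -/
abbrev E3 := EuclideanSpace ℝ (Fin 3)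

def toE3 (v : Fin 3 → ℝ) : E3 := (EuclideanSpace.equiv (Fin 3) ℝ).symm v

/-- Jacobian matrix of a map `f : ℝ³ → ℝ³` at `x`. -/
def jac (f : E3 → E3) (x : E3) : Matrix (Fin 3) (Fin 3) ℝ :=
  Matrix.of fun i j => fderiv ℝ f x (EuclideanSpace.single j 1) i

/-- Squared Frobenius norm of the Jacobian of `f` at `x`. -/
def frobSq (f : E3 → E3) (x : E3) : ℝ := ∑ i, ∑ j, (jac f x i j) ^ 2

/-- The denominator `√(4z²(x²+y²) + (1+x²+y²−z²)²)`. -/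
def den (p : E3) : ℝ :=
  Real.sqrt (4 * (p 2) ^ 2 * ((p 0) ^ 2 + (p 1) ^ 2) +
    (1 + (p 0) ^ 2 + (p 1) ^ 2 - (p 2) ^ 2) ^ 2)

/-- The explicit competitor
`u₀(x,y,z) = (−2zx, −2zy, x²+y²−z²+1)/√(4z²(x²+y²)+(1+x²+y²−z²)²)`. -/
def u0 (p : E3) : E3 :=
  toE3 ![(-2 * p 2 * p 0) / den p, (-2 * p 2 * p 1) / den p,
    ((p 0) ^ 2 + (p 1) ^ 2 - (p 2) ^ 2 + 1) / den p]

/-!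
Write `u₀ = w / ‖w‖` with `w = (-2zx, -2zy, x² + y² - z² + 1)`. The differential of `w ↦ w / ‖w‖` is
`‖w‖⁻¹` times the orthogonal projection onto the complement of `w`, so
`‖Du₀‖² = (‖Dw‖² - ‖wᵀ Dw‖² / ‖w‖²) / ‖w‖²`. Here `‖Dw‖² = 8ρ² + 12z²`, and `‖wᵀ Dw‖²` is divisible
by `‖w‖²`: it equals `4 (ρ² + z²) ‖w‖²`, that is, `‖∇‖w‖‖ = 2 ‖p‖`. The difference is `4ρ² + 8z²`.
The field `w` vanishes only at the poles `(0, 0, ±1)` of the unit sphere, because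
`‖w‖² = (‖p‖² - 1)² + 4ρ²`.
-/

open Matrix (toEuclideanCLM vecMul of_apply cons_val)
open scoped Matrix RealInnerProductSpace

section Normalize

theorem norm_starProjection_orthogonal_singleton_sq {𝕜 E : Type*} [RCLike 𝕜]
    [NormedAddCommGroup E] [InnerProductSpace 𝕜 E] (x v : E) :
    ‖(𝕜 ∙ x)ᗮ.starProjection v‖ ^ 2 = ‖v‖ ^ 2 - ‖inner 𝕜 x v‖ ^ 2 / ‖x‖ ^ 2 := by
  have pythagoras := Submodule.norm_sq_eq_add_norm_sq_projection v (𝕜 ∙ x)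
  have norm_along : ‖(𝕜 ∙ x).starProjection v‖ = ‖inner 𝕜 x v‖ / ‖x‖ := by
    rcases eq_or_ne x 0 with rfl | hx
    · simp
    · have := norm_ne_zero_iff.2 hx
      simp only [Submodule.starProjection_singleton, norm_smul, norm_div, norm_algebraMap',
        norm_pow, norm_norm]
      field_simp
  rw [← div_pow, ← norm_along]
  exact eq_sub_of_add_eq' pythagoras.symm

variable {E F : Type*} [NormedAddCommGroup E] [NormedSpace ℝ E]
  [NormedAddCommGroup F] [InnerProductSpace ℝ F]

theorem hasFDerivAt_norm {x : F} (hx : x ≠ 0) :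
    HasFDerivAt (fun y : F => ‖y‖) (‖x‖⁻¹ • innerSL ℝ x) x := by
  have h := (hasStrictFDerivAt_norm_sq x).hasFDerivAt.sqrt (pow_ne_zero 2 (norm_ne_zero_iff.2 hx))
  simp only [sqrt_sq (norm_nonneg _)] at h
  refine h.congr_fderiv ?_
  ext v
  simp only [smul_apply, coe_innerSL_apply, nsmul_eq_mul, Nat.cast_ofNat, smul_eq_mul]
  field_simp

theorem hasFDerivAt_normalize {x : F} (hx : x ≠ 0) :
    HasFDerivAt NormedSpace.normalize (‖x‖⁻¹ • (ℝ ∙ x)ᗮ.starProjection) x := by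
  have hx' := norm_ne_zero_iff.2 hx
  have proj_eq (v : F) : (ℝ ∙ x)ᗮ.starProjection v = v - (⟪x, v⟫ / ‖x‖ ^ 2) • x := by
    simp [Submodule.starProjection_orthogonal, Submodule.starProjection_singleton]
  have h := ((hasDerivAt_inv hx').comp_hasFDerivAt x (hasFDerivAt_norm hx)).smul (hasFDerivAt_id x)
  refine h.congr_fderiv ?_
  ext v
  simp only [Function.comp_apply, id_eq, add_apply, smul_apply, ContinuousLinearMap.id_apply,
    ContinuousLinearMap.smulRight_apply, coe_innerSL_apply, smul_eq_mul, proj_eq]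
  match_scalars <;> field_simp

theorem norm_fderiv_normalize_comp_sq {f : E → F} {x : E} (hf : DifferentiableAt ℝ f x)
    (hfx : f x ≠ 0) (v : E) :
    ‖fderiv ℝ (NormedSpace.normalize ∘ f) x v‖ ^ 2 =
      (‖fderiv ℝ f x v‖ ^ 2 - ⟪f x, fderiv ℝ f x v⟫ ^ 2 / ‖f x‖ ^ 2) / ‖f x‖ ^ 2 := by
  rw [((hasFDerivAt_normalize hfx).comp x hf.hasFDerivAt).fderiv]
  simp only [ContinuousLinearMap.smul_comp, smul_apply, ContinuousLinearMap.comp_apply,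
    norm_smul, norm_inv, norm_norm, mul_pow, norm_starProjection_orthogonal_singleton_sq,
    norm_eq_abs (inner _ _ _), sq_abs]
  field_simp

end Normalize

theorem proj_comp_toEuclideanCLM_apply {𝕜 n : Type*} [RCLike 𝕜] [Fintype n] [DecidableEq n]
    (A : Matrix n n 𝕜) (i : n) (v : EuclideanSpace 𝕜 n) :
    (PiLp.proj 2 _ i ∘L toEuclideanCLM (𝕜 := 𝕜) A) v = ∑ j, A i j * v j :=
  rfl

section FrobSq

variable {f : E3 → E3} {p : E3}

theorem frobSq_eq_sum_norm_fderiv_single_sq (f : E3 → E3) (p : E3) :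
    frobSq f p = ∑ j, ‖fderiv ℝ f p (EuclideanSpace.single j 1)‖ ^ 2 := by
  simp only [EuclideanSpace.real_norm_sq_eq]
  exact Finset.sum_comm

theorem inner_fderiv_single (f : E3 → E3) (p : E3) (j : Fin 3) :
    ⟪f p, fderiv ℝ f p (EuclideanSpace.single j 1)⟫ = (f p ᵥ* jac f p) j := by
  simp [PiLp.inner_apply, vecMul, dotProduct, jac, mul_comm]

theorem frobSq_normalize_comp (hf : DifferentiableAt ℝ f p) (hfp : f p ≠ 0) :
    frobSq (NormedSpace.normalize ∘ f) p =
      (frobSq f p - (∑ j, (f p ᵥ* jac f p) j ^ 2) / ‖f p‖ ^ 2) / ‖f p‖ ^ 2 := by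
  simp only [frobSq_eq_sum_norm_fderiv_single_sq, norm_fderiv_normalize_comp_sq hf hfp,
    inner_fderiv_single, Finset.sum_sub_distrib, ← Finset.sum_div]

theorem jac_eq_of_hasFDerivAt {A : Matrix (Fin 3) (Fin 3) ℝ}
    (hf : HasFDerivAt f (toEuclideanCLM (𝕜 := ℝ) A : E3 →L[ℝ] E3) p) : jac f p = A := by
  ext i j
  simp [jac, hf.fderiv]

end FrobSq

/-- The unnormalised field `w`, the numerator of `u₀`. -/
def u0Num (p : E3) : E3 :=
  toE3 ![-2 * p 2 * p 0, -2 * p 2 * p 1, p 0 ^ 2 + p 1 ^ 2 - p 2 ^ 2 + 1]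

/-- The Jacobian matrix of `u0Num`; row `i` is the gradient of the `i`-th component, as in `jac`. -/
def u0NumJac (p : E3) : Matrix (Fin 3) (Fin 3) ℝ :=
  !![-2 * p 2, 0, -2 * p 0; 0, -2 * p 2, -2 * p 1; 2 * p 0, 2 * p 1, -2 * p 2]

theorem norm_u0Num (p : E3) : ‖u0Num p‖ = den p := by
  rw [EuclideanSpace.norm_eq, den]
  simp only [u0Num, toE3, PiLp.continuousLinearEquiv_symm_apply, norm_eq_abs, sq_abs,
    Fin.sum_univ_three, cons_val]
  congr 1
  ring

theorem u0_eq_normalize_u0Num : u0 = NormedSpace.normalize ∘ u0Num := by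
  ext p i
  simp only [Function.comp_apply, NormedSpace.normalize, norm_u0Num]
  fin_cases i <;> simp [u0, u0Num, toE3, div_eq_inv_mul]

theorem hasFDerivAt_u0Num (p : E3) :
    HasFDerivAt u0Num (toEuclideanCLM (𝕜 := ℝ) (u0NumJac p) : E3 →L[ℝ] E3) p := by
  have hcoord (i : Fin 3) :
      HasStrictFDerivAt (fun q : E3 => q i) (EuclideanSpace.proj i : E3 →L[ℝ] ℝ) p :=
    (EuclideanSpace.proj i : E3 →L[ℝ] ℝ).hasStrictFDerivAt
  refine (hasStrictFDerivAt_euclidean.2 fun i => ?_).hasFDerivAt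
  match i with
  | 0 =>
    refine (((hcoord 2).const_mul (-2)).mul (hcoord 0)).congr_fderiv ?_
    ext v
    simp only [add_apply, smul_apply, smul_eq_mul, PiLp.proj_apply,
      proj_comp_toEuclideanCLM_apply, u0NumJac, Fin.sum_univ_three, of_apply, cons_val]
    ring
  | 1 =>
    refine (((hcoord 2).const_mul (-2)).mul (hcoord 1)).congr_fderiv ?_
    ext v
    simp only [add_apply, smul_apply, smul_eq_mul, PiLp.proj_apply,
      proj_comp_toEuclideanCLM_apply, u0NumJac, Fin.sum_univ_three, of_apply, cons_val]
    ring
  | 2 =>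
    refine (((((hcoord 0).pow 2).add ((hcoord 1).pow 2)).sub
      ((hcoord 2).pow 2)).add_const 1).congr_fderiv ?_
    ext v
    simp only [sub_apply, nsmul_eq_mul, Nat.cast_ofNat, add_apply, smul_apply, smul_eq_mul,
      PiLp.proj_apply, proj_comp_toEuclideanCLM_apply, u0NumJac, Fin.sum_univ_three, of_apply,
      cons_val]
    ring

theorem jac_u0Num (p : E3) : jac u0Num p = u0NumJac p :=
  jac_eq_of_hasFDerivAt (hasFDerivAt_u0Num p)

theorem frobSq_u0Num (p : E3) : frobSq u0Num p = 8 * (p 0 ^ 2 + p 1 ^ 2) + 12 * p 2 ^ 2 := by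
  simp only [frobSq, jac_u0Num, u0NumJac, of_apply, Fin.sum_univ_three, cons_val]
  ring

theorem den_sq (p : E3) :
    den p ^ 2 = 4 * p 2 ^ 2 * (p 0 ^ 2 + p 1 ^ 2) + (1 + p 0 ^ 2 + p 1 ^ 2 - p 2 ^ 2) ^ 2 :=
  sq_sqrt (by positivity)

theorem den_sq_eq_norm_sq_sub_one_sq_add (p : E3) :
    den p ^ 2 = (‖p‖ ^ 2 - 1) ^ 2 + 4 * (p 0 ^ 2 + p 1 ^ 2) := by
  rw [den_sq, EuclideanSpace.real_norm_sq_eq, Fin.sum_univ_three]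
  ring

theorem den_ne_zero_of_norm_ne_one {p : E3} (hp : ‖p‖ ≠ 1) : den p ≠ 0 := by
  have hsq : ‖p‖ ^ 2 - 1 ≠ 0 :=
    sub_ne_zero.2 ((pow_eq_one_iff_of_nonneg (norm_nonneg p) two_ne_zero).not.2 hp)
  rw [← pow_ne_zero_iff two_ne_zero, den_sq_eq_norm_sq_sub_one_sq_add]
  positivity

theorem sum_sq_u0Num_vecMul_jac (p : E3) :
    ∑ j, (u0Num p ᵥ* jac u0Num p) j ^ 2 = 4 * ‖p‖ ^ 2 * den p ^ 2 := by
  rw [den_sq, EuclideanSpace.real_norm_sq_eq, jac_u0Num]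
  simp only [u0Num, toE3, PiLp.continuousLinearEquiv_symm_apply, u0NumJac, vecMul, dotProduct,
    Fin.sum_univ_three, of_apply, cons_val]
  ring

theorem u0_energy_density_general {p : E3} (hp : den p ≠ 0) :
    DifferentiableAt ℝ u0 p ∧
    frobSq u0 p =
      (4 * ((p 0) ^ 2 + (p 1) ^ 2) + 8 * (p 2) ^ 2) /
        (4 * (p 2) ^ 2 * ((p 0) ^ 2 + (p 1) ^ 2) +
          (1 + (p 0) ^ 2 + (p 1) ^ 2 - (p 2) ^ 2) ^ 2) ∧
    4 * (p 2) ^ 2 * ((p 0) ^ 2 + (p 1) ^ 2) +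
        (1 + (p 0) ^ 2 + (p 1) ^ 2 - (p 2) ^ 2) ^ 2 =
      ((p 0) ^ 2 + (p 1) ^ 2) ^ 2 + 2 * ((p 0) ^ 2 + (p 1) ^ 2) * (p 2) ^ 2 +
        2 * ((p 0) ^ 2 + (p 1) ^ 2) + (p 2) ^ 4 - 2 * (p 2) ^ 2 + 1 := by
  have hnum : u0Num p ≠ 0 := by rwa [← norm_ne_zero_iff, norm_u0Num]
  have hdiff := (hasFDerivAt_u0Num p).differentiableAt
  refine ⟨?_, ?_, by ring⟩
  · rw [u0_eq_normalize_u0Num]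
    exact (hasFDerivAt_normalize hnum).differentiableAt.comp p hdiff
  · rw [u0_eq_normalize_u0Num, frobSq_normalize_comp hdiff hnum, frobSq_u0Num,
      sum_sq_u0Num_vecMul_jac, norm_u0Num, mul_div_cancel_right₀ _ (pow_ne_zero 2 hp), den_sq,
      EuclideanSpace.real_norm_sq_eq, Fin.sum_univ_three]
    ring

/-- On the open unit ball, `u₀` is differentiable and
`‖Du₀‖² = (4ρ² + 8z²)/(4z²ρ² + (1+ρ²−z²)²)`, whose denominator equals
`ρ⁴ + 2ρ²z² + 2ρ² + z⁴ − 2z² + 1`. -/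
theorem u0_energy_density (p : E3) (hp : ‖p‖ < 1) :
    DifferentiableAt ℝ u0 p ∧
    frobSq u0 p =
      (4 * ((p 0) ^ 2 + (p 1) ^ 2) + 8 * (p 2) ^ 2) /
        (4 * (p 2) ^ 2 * ((p 0) ^ 2 + (p 1) ^ 2) +
          (1 + (p 0) ^ 2 + (p 1) ^ 2 - (p 2) ^ 2) ^ 2) ∧
    4 * (p 2) ^ 2 * ((p 0) ^ 2 + (p 1) ^ 2) +
        (1 + (p 0) ^ 2 + (p 1) ^ 2 - (p 2) ^ 2) ^ 2 =
      ((p 0) ^ 2 + (p 1) ^ 2) ^ 2 + 2 * ((p 0) ^ 2 + (p 1) ^ 2) * (p 2) ^ 2 +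
        2 * ((p 0) ^ 2 + (p 1) ^ 2) + (p 2) ^ 4 - 2 * (p 2) ^ 2 + 1 :=
  u0_energy_density_general (den_ne_zero_of_norm_ne_one hp.ne)
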